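/- arXiv:1201.0240 — 2 statements merged into one kernel-verified Lean document; each statement's English description precedes it below -/
import Mathlib

section
/- Let k ≥ 2 and let a_1,…,a_k and b_1,…,b_{k−1} be real numbers satisfying the interlacing chain a_1 ≥ b_1 ≥ a_2 ≥ b_2 ≥ … ≥ b_{k−1} ≥ |a_k|. Then there exists a vector Y = (y_1,…,y_{2k−1}) ∈ ℝ^{2k−1} such that the skew-symmetric matrix A(b,Y) is SO(2k)-conjugate to the block-diagonal matrix diag(L(a_1),…,L(a_k)). -/
open Matrix Polynomial

/-- The `m × m` real matrix built from the `2 × 2` blocks `L (c 0), …, L (c (n-1))`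
(where `L a` has first row `(0, -a)` and second row `(a, 0)`) placed along the
diagonal, all remaining entries being `0`.  For `m = 2n` this is
`diag (L c₁, …, L cₙ)`; for `m = 2n+1` this is `diag (L c₁, …, L cₙ, 0)`. -/
def diagL (m n : ℕ) (c : Fin n → ℝ) : Matrix (Fin m) (Fin m) ℝ :=
  Matrix.of fun i j =>
    if h : i.val / 2 = j.val / 2 ∧ i.val / 2 < n then
      if i.val % 2 = 0 ∧ j.val % 2 = 1 then -c ⟨i.val / 2, h.2⟩
      else if i.val % 2 = 1 ∧ j.val % 2 = 0 then c ⟨i.val / 2, h.2⟩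
      else 0
    else 0

/-- `X` and `Y` are conjugate by a special orthogonal matrix:
there is `B` with `BᵀB = 1`, `det B = 1` and `B X B⁻¹ = Y`. -/
def SOConj {m : ℕ} (X Y : Matrix (Fin m) (Fin m) ℝ) : Prop :=
  ∃ B : Matrix (Fin m) (Fin m) ℝ, Bᵀ * B = 1 ∧ B.det = 1 ∧ B * X * B⁻¹ = Y

/-- The `2k × 2k` real skew-symmetric matrix `A(b, Y)` with top-left
`(2k-1) × (2k-1)` block `diag (L b₁, …, L b_{k-1}, 0)`, last column
`(y₁, …, y_{2k-1}, 0)ᵀ` and last row `(-y₁, …, -y_{2k-1}, 0)`. -/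
def Aeven (k : ℕ) (b : Fin (k-1) → ℝ) (Y : Fin (2*k-1) → ℝ) :
    Matrix (Fin (2*k)) (Fin (2*k)) ℝ :=
  Matrix.of fun i j =>
    if hi : i.val < 2*k-1 then
      if hj : j.val < 2*k-1 then diagL (2*k-1) (k-1) b ⟨i.val, hi⟩ ⟨j.val, hj⟩
      else Y ⟨i.val, hi⟩
    else if hj : j.val < 2*k-1 then -Y ⟨j.val, hj⟩ else 0

/-!
Number rows and columns from `0` and split the indices into even and odd ones. This turns
`diag(L(a₁), …, L(a_k))` into the bipartite matrix with off-diagonal blocks `-D`, `Dᵀ` for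
`D = diag(a₁, …, a_k)`. If `Y` vanishes at the odd indices and equals `-v` at the even ones, then
`A(b, Y)` becomes the bipartite matrix of `M = diag(b₁, …, b_{k-1}, 0) + v e_kᵀ`. Conjugation by
`diag(P, Q)` sends `M` to `P M Qᵀ`, so it suffices to choose `v` such that `M` has singular values
`|a_i|`.

Now `M Mᵀ = diag(b₁², …, b_{k-1}², 0) + v vᵀ` is a rank-one update of a diagonal matrix. For
strictly interlacing spectra the secular equation yields a `v` giving it the eigenvalues `a_i²`; the
weakly interlacing case follows by compactness of the orthogonal group and properness of `v ↦ v vᵀ`.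
Since matrices with equal Gram matrices `M Mᵀ` differ by an orthogonal factor on the right, this
produces `P` and `Q`. The sign of `det P · det Q` can be changed by replacing `v` with `-v`, because
the last diagonal entry of `diag(b₁, …, b_{k-1}, 0)` vanishes and so a reflection absorbs this.
-/

section UnitaryFactor

variable {𝕜 : Type*} [RCLike 𝕜]

lemma exists_linearIsometry_comp_eq_of_norm_eq {E F : Type*} [AddCommGroup E] [Module 𝕜 E]
    [NormedAddCommGroup F] [InnerProductSpace 𝕜 F] [FiniteDimensional 𝕜 F] {f g : E →ₗ[𝕜] F}
    (h : ∀ x, ‖f x‖ = ‖g x‖) : ∃ U : F →ₗᵢ[𝕜] F, ∀ x, U (g x) = f x := by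
  have hker : LinearMap.ker g ≤ LinearMap.ker f := fun x hx => by
    rw [LinearMap.mem_ker, ← norm_eq_zero] at hx ⊢
    rw [h, hx]
  let L : LinearMap.range g →ₗ[𝕜] F :=
    (LinearMap.ker g).liftQ f hker ∘ₗ g.quotKerEquivRange.symm.toLinearMap
  have hL (x : E) : L ⟨g x, x, rfl⟩ = f x := by
    have : g.quotKerEquivRange.symm ⟨g x, x, rfl⟩ = (LinearMap.ker g).mkQ x :=
      g.quotKerEquivRange.symm_apply_eq.2 rfl
    simp [L, this]
  let Li : LinearMap.range g →ₗᵢ[𝕜] F :=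
    ⟨L, by rintro ⟨_, x, rfl⟩; rw [hL, h]; rfl⟩
  exact ⟨Li.extend, fun x => (Li.extend_apply ⟨g x, x, rfl⟩).trans (hL x)⟩

lemma exists_mem_unitaryGroup_eq_mul_of_mul_conjTranspose_eq {m n : Type*} [Finite m]
    [Fintype n] [DecidableEq n] {M N : Matrix m n 𝕜} (h : M * Mᴴ = N * Nᴴ) :
    ∃ Q ∈ unitaryGroup n 𝕜, M = N * Q := by
  classical
  have := Fintype.ofFinite m
  have hnorm (x : EuclideanSpace 𝕜 m) : ‖toEuclideanLin Mᴴ x‖ = ‖toEuclideanLin Nᴴ x‖ := by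
    have inner_self (K : Matrix m n 𝕜) :
        inner 𝕜 (toEuclideanLin Kᴴ x) (toEuclideanLin Kᴴ x) =
          inner 𝕜 x (toEuclideanLin (K * Kᴴ) x) := by
      rw [toLpLin_mul_same, toEuclideanLin_conjTranspose_eq_adjoint,
        LinearMap.adjoint_inner_left, LinearMap.comp_apply]
    rw [@norm_eq_sqrt_re_inner 𝕜, @norm_eq_sqrt_re_inner 𝕜, inner_self, inner_self, h]
  obtain ⟨U, hU⟩ := exists_linearIsometry_comp_eq_of_norm_eq hnorm
  let e := EuclideanSpace.basisFun n 𝕜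
  let Q := (U.toLinearIsometryEquiv rfl).toMatrix e.toBasis e.toBasis
  have hQU : toEuclideanLin Q = U.toLinearMap := by
    rw [toEuclideanLin_eq_toLin_orthonormal, toLin_toMatrix]
    rfl
  have hQ : Q * Nᴴ = Mᴴ := toEuclideanLin.injective <| LinearMap.ext fun x => by
    rw [toLpLin_mul_same, hQU]
    exact hU x
  refine ⟨star Q, Unitary.star_mem (LinearIsometryEquiv.toMatrix_mem_unitaryGroup _ e e), ?_⟩
  rw [← conjTranspose_conjTranspose M, ← hQ, conjTranspose_mul, conjTranspose_conjTranspose,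
    star_eq_conjTranspose]

end UnitaryFactor

lemma isProperMap_vecMulVec_self {ι : Type*} [Finite ι] :
    IsProperMap fun v : ι → ℝ => vecMulVec v v := by
  have := Fintype.ofFinite ι
  have hcont : Continuous fun v : ι → ℝ => vecMulVec v v :=
    continuous_id.matrix_vecMulVec continuous_id
  have norm_sq_le (v : ι → ℝ) : ‖v‖ ^ 2 ≤ trace (vecMulVec v v) := by
    have h : ‖v‖ ≤ √(v ⬝ᵥ v) := (pi_norm_le_iff_of_nonneg (Real.sqrt_nonneg _)).2 fun i =>
      Real.abs_le_sqrt <| (sq (v i)).trans_le <|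
        Finset.single_le_sum (fun j _ => mul_self_nonneg (v j)) (Finset.mem_univ i)
    rw [trace_vecMulVec]
    exact (Real.le_sqrt (norm_nonneg v) (Finset.sum_nonneg fun i _ => mul_self_nonneg (v i))).1 h
  refine isProperMap_of_comp_of_t2 hcont continuous_id.matrix_trace
    (isProperMap_iff_tendsto_cocompact.2 ⟨hcont.matrix_trace, ?_⟩)
  refine Filter.Tendsto.mono_right ?_ atTop_le_cocompact
  exact Filter.tendsto_atTop_mono norm_sq_le
    ((Filter.tendsto_pow_atTop two_ne_zero).comp tendsto_norm_cocompact_atTop)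

section SymmetricMatrix

variable {ι : Type*} [Fintype ι] [DecidableEq ι]

lemma exists_mem_orthogonalGroup_eq_of_injective_eigenvalues {A : Matrix ι ι ℝ} (hA : A.IsSymm)
    {μ : ι → ℝ} (hμ : Function.Injective μ) {x : ι → ι → ℝ} (hx : ∀ i, x i ≠ 0)
    (hAx : ∀ i, A *ᵥ x i = μ i • x i) :
    ∃ P ∈ orthogonalGroup ι ℝ, A = Pᵀ * diagonal μ * P := by
  have horth (i j : ι) (hij : i ≠ j) : x i ⬝ᵥ x j = 0 := by
    have h : μ j * (x i ⬝ᵥ x j) = μ i * (x i ⬝ᵥ x j) := by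
      calc μ j * (x i ⬝ᵥ x j) = x i ⬝ᵥ A *ᵥ x j := by rw [hAx, dotProduct_smul, smul_eq_mul]
        _ = (A *ᵥ x i) ⬝ᵥ x j := by rw [dotProduct_mulVec, ← mulVec_transpose, hA.eq]
        _ = μ i * (x i ⬝ᵥ x j) := by rw [hAx, smul_dotProduct, smul_eq_mul]
    by_contra h0
    exact hij (hμ (mul_right_cancel₀ h0 h)).symm
  let r (i : ι) : ℝ := (√(x i ⬝ᵥ x i))⁻¹
  have hr (i : ι) : r i * r i * (x i ⬝ᵥ x i) = 1 := by
    have hpos : 0 < x i ⬝ᵥ x i := by simpa using dotProduct_star_self_pos_iff.2 (hx i)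
    rw [← mul_inv, Real.mul_self_sqrt hpos.le, inv_mul_cancel₀ hpos.ne']
  let P : Matrix ι ι ℝ := of fun i => r i • x i
  have hP : P * Pᵀ = 1 := by
    ext i j
    have hij : (P * Pᵀ) i j = r i * r j * (x i ⬝ᵥ x j) := by
      change (r i • x i) ⬝ᵥ (r j • x j) = _
      rw [smul_dotProduct, dotProduct_smul, smul_smul, smul_eq_mul]
    rcases eq_or_ne i j with rfl | h
    · rw [hij, hr, one_apply_eq]
    · rw [hij, horth i j h, mul_zero, one_apply_ne h]
  have hPA : P * A = diagonal μ * P := by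
    ext i j
    change ((r i • x i) ᵥ* A) j = _
    rw [diagonal_mul, ← mulVec_transpose, hA.eq, mulVec_smul, hAx]
    simp [P, mul_left_comm]
  refine ⟨P, (mem_orthogonalGroup_iff ι ℝ).2 hP, ?_⟩
  rw [Matrix.mul_assoc, ← hPA, ← Matrix.mul_assoc, mul_eq_one_comm.1 hP, Matrix.one_mul]

lemma isCompact_orthogonalGroup : IsCompact (orthogonalGroup ι ℝ : Set (Matrix ι ι ℝ)) := by
  have hbox : IsCompact (Set.univ.pi fun _ => Set.univ.pi fun _ => Set.Icc (-1) 1 :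
      Set (ι → ι → ℝ)) :=
    isCompact_univ_pi fun _ => isCompact_univ_pi fun _ => isCompact_Icc
  have hclosed : IsClosed (orthogonalGroup ι ℝ : Set (Matrix ι ι ℝ)) := by
    have : (orthogonalGroup ι ℝ : Set (Matrix ι ι ℝ)) = {P | P * Pᵀ = 1} :=
      Set.ext fun P => mem_orthogonalGroup_iff ι ℝ
    rw [this]
    exact isClosed_eq (by fun_prop) continuous_const
  refine hbox.of_isClosed_subset hclosed fun P hP i _ j _ => ?_
  simpa [abs_le] using entry_norm_bound_of_unitary (𝕜 := ℝ) hP i j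

lemma isClosed_setOf_exists_add_vecMulVec_eq_conj :
    IsClosed {p : Matrix ι ι ℝ × Matrix ι ι ℝ |
      ∃ v, ∃ P ∈ orthogonalGroup ι ℝ, p.2 + vecMulVec v v = Pᵀ * p.1 * P} := by
  let K := orthogonalGroup ι ℝ
  have : CompactSpace K := isCompact_iff_compactSpace.1 isCompact_orthogonalGroup
  have hcont : Continuous fun q : (Matrix ι ι ℝ × Matrix ι ι ℝ) × K =>
    (q.2 : Matrix ι ι ℝ)ᵀ * q.1.1 * q.2 - q.1.2 := by fun_prop
  convert isClosedMap_fst_of_compactSpace _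
    (isProperMap_vecMulVec_self.isClosedMap.isClosed_range.preimage hcont) using 1
  ext ⟨A, B⟩
  constructor
  · rintro ⟨v, P, hP, h⟩
    exact ⟨((A, B), ⟨P, hP⟩), ⟨v, eq_sub_of_add_eq' h⟩, rfl⟩
  · rintro ⟨⟨_, P, hP⟩, ⟨v, hv⟩, rfl⟩
    exact ⟨v, P, hP, eq_sub_iff_add_eq'.1 hv⟩

end SymmetricMatrix

section SecularEquation

variable {ι F : Type*} [Fintype ι] [DecidableEq ι] [Field F]

/-- The residue of `-∏ i, (X - α i) / ∏ i, (X - β i)` at the simple pole `β j`. It is the square of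
the `j`-th coordinate of a vector `v` for which `diagonal β + vecMulVec v v` has spectrum `α`. -/
def secularWeight (α β : ι → F) (j : ι) : F :=
  -(Lagrange.nodalWeight Finset.univ β j * ∏ i, (β j - α i))

lemma sum_secularWeight_div_eq_one {α β : ι → F} (hβ : Function.Injective β)
    {i : ι} (hi : ∀ j, α i ≠ β j) : ∑ j, secularWeight α β j / (α i - β j) = 1 := by
  have hdeg : (Lagrange.nodal Finset.univ β - Lagrange.nodal Finset.univ α).degree <
      (Finset.univ : Finset ι).card := by
    have := degree_sub_lt_left (p := Lagrange.nodal Finset.univ β)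
      (q := Lagrange.nodal Finset.univ α) (by simp [Lagrange.degree_nodal])
      Lagrange.nodal_monic.ne_zero
      (by rw [Lagrange.nodal_monic.leadingCoeff, Lagrange.nodal_monic.leadingCoeff])
    simpa only [Lagrange.degree_nodal] using this
  have hinterp := Lagrange.eq_interpolate_of_eval_eq (fun j => -∏ i, (β j - α i))
    hβ.injOn hdeg fun j _ => by
      simp [Lagrange.eval_nodal, Finset.prod_eq_zero (Finset.mem_univ j)]
  have heval := congrArg (eval (α i)) hinterp
  rw [Lagrange.eval_interpolate_not_at_node _ fun j _ => hi j, eval_sub,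
    Lagrange.eval_nodal_at_node (Finset.mem_univ i), sub_zero] at heval
  have hnodal : eval (α i) (Lagrange.nodal Finset.univ β) ≠ 0 :=
    Lagrange.eval_nodal_not_at_node fun j _ => hi j
  refine (mul_left_cancel₀ hnodal ((mul_one _).trans heval) ▸
    Finset.sum_congr rfl fun j _ => ?_)
  rw [secularWeight]
  ring

lemma diagonal_add_vecMulVec_mulVec_eq_smul {β v : ι → F} {μ : F} (hμ : ∀ j, μ ≠ β j)
    (h : ∑ j, v j ^ 2 / (μ - β j) = 1) :
    (diagonal β + vecMulVec v v) *ᵥ (fun j => v j / (μ - β j)) = μ • fun j => v j / (μ - β j) := by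
  have hdot : v ⬝ᵥ (fun j => v j / (μ - β j)) = 1 := by
    rw [← h]
    exact Finset.sum_congr rfl fun j _ => by ring
  ext j
  have : μ - β j ≠ 0 := sub_ne_zero.2 (hμ j)
  rw [add_mulVec, vecMulVec_mulVec, hdot, Pi.add_apply, mulVec_diagonal]
  simp only [MulOpposite.op_one, Pi.smul_apply, one_smul, smul_eq_mul]
  field_simp
  ring

end SecularEquation

section Interlacing

/-- `α` interlaces `β`: for indices `1 < 2 < …` this is the chain `α₁ ≥ β₁ ≥ α₂ ≥ β₂ ≥ …`. -/
structure Interlaces {ι R : Type*} [Preorder ι] [Preorder R] (α β : ι → R) : Prop where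
  le_of_le : ∀ ⦃i j⦄, i ≤ j → β j ≤ α i
  le_of_lt : ∀ ⦃i j⦄, i < j → α j ≤ β i

/-- `α` strictly interlaces `β`: for indices `1 < 2 < …` this is the chain
`α₁ > β₁ > α₂ > β₂ > …`. -/
structure StrictlyInterlaces {ι R : Type*} [Preorder ι] [Preorder R] (α β : ι → R) : Prop where
  lt_of_le : ∀ ⦃i j⦄, i ≤ j → β j < α i
  lt_of_lt : ∀ ⦃i j⦄, i < j → α j < β i

namespace StrictlyInterlaces

section Preorder

variable {ι R : Type*} [Preorder ι] [Preorder R] {α β : ι → R}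

lemma strictAnti_left (h : StrictlyInterlaces α β) : StrictAnti α := fun _ _ hij =>
  (h.lt_of_lt hij).trans (h.lt_of_le le_rfl)

lemma strictAnti_right (h : StrictlyInterlaces α β) : StrictAnti β := fun _ _ hij =>
  (h.lt_of_le le_rfl).trans (h.lt_of_lt hij)

end Preorder

variable {ι : Type*} [LinearOrder ι]

lemma ne {R : Type*} [Preorder R] {α β : ι → R} (h : StrictlyInterlaces α β) (i j : ι) :
    α i ≠ β j :=
  (le_or_gt i j).elim (fun hij => (h.lt_of_le hij).ne') fun hij => (h.lt_of_lt hij).ne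

variable [Fintype ι]

lemma secularWeight_pos {F : Type*} [Field F] [LinearOrder F] [IsStrictOrderedRing F]
    {α β : ι → F} (h : StrictlyInterlaces α β) (j : ι) : 0 < secularWeight α β j := by
  have hw : secularWeight α β j = (α j - β j) *
      ∏ i ∈ Finset.univ.erase j, ((β j - β i)⁻¹ * (β j - α i)) := by
    rw [secularWeight, Lagrange.nodalWeight, Finset.prod_mul_distrib,
      ← Finset.mul_prod_erase Finset.univ (fun i => β j - α i) (Finset.mem_univ j)]
    ring
  rw [hw]
  refine mul_pos (sub_pos.2 (h.lt_of_le le_rfl)) (Finset.prod_pos fun i hi => ?_)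
  rcases lt_or_gt_of_ne (Finset.ne_of_mem_erase hi) with hij | hji
  · exact mul_pos_of_neg_of_neg (inv_lt_zero.2 (sub_neg.2 (h.strictAnti_right hij)))
      (sub_neg.2 (h.lt_of_le hij.le))
  · exact mul_pos (inv_pos.2 (sub_pos.2 (h.strictAnti_right hji))) (sub_pos.2 (h.lt_of_lt hji))

variable {α β : ι → ℝ}

lemma exists_add_vecMulVec_eq_conj (h : StrictlyInterlaces α β) :
    ∃ v, ∃ P ∈ orthogonalGroup ι ℝ,
      diagonal β + vecMulVec v v = Pᵀ * diagonal α * P := by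
  let v (j : ι) : ℝ := √(secularWeight α β j)
  have hsecular (i : ι) : ∑ j, v j ^ 2 / (α i - β j) = 1 := by
    simpa only [v, Real.sq_sqrt (h.secularWeight_pos _).le] using
      sum_secularWeight_div_eq_one h.strictAnti_right.injective (h.ne i)
  have hsymm : (diagonal β + vecMulVec v v).IsSymm :=
    (isSymm_diagonal β).add (transpose_vecMulVec v v)
  have heigenvector (i : ι) : (fun j => v j / (α i - β j)) ≠ 0 := fun h0 =>
    div_ne_zero (Real.sqrt_pos.2 (h.secularWeight_pos i)).ne' (sub_ne_zero.2 (h.ne i i))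
      (congrFun h0 i)
  exact ⟨v, exists_mem_orthogonalGroup_eq_of_injective_eigenvalues hsymm
    h.strictAnti_left.injective heigenvector fun i =>
      diagonal_add_vecMulVec_mulVec_eq_smul (h.ne i) (hsecular i)⟩

end StrictlyInterlaces

namespace Interlaces

lemma of_forall_succ {R : Type*} [Preorder R] {n : ℕ} {α β : Fin (n + 1) → R}
    (hβα : ∀ i, β i ≤ α i) (hαβ : ∀ i : Fin n, α i.succ ≤ β i.castSucc) : Interlaces α β := by
  have hβ : Antitone β := Fin.antitone_iff_succ_le.2 fun i => (hβα _).trans (hαβ i)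
  refine ⟨fun i j hij => (hβ hij).trans (hβα i), fun i j hij => ?_⟩
  obtain ⟨j, rfl⟩ := Fin.exists_succ_eq.2 (Fin.ne_zero_of_lt hij)
  exact (hαβ j).trans (hβ (Fin.le_castSucc_iff.2 hij))

variable {ι : Type*} [LinearOrder ι] {α β : ι → ℝ}

lemma exists_strictlyInterlaces_perturbation [Finite ι] (h : Interlaces α β) :
    ∃ s t : ι → ℝ, ∀ ε : ℝ, 0 < ε → StrictlyInterlaces (α + ε • s) (β + ε • t) := by
  have := Fintype.ofFinite ι
  let e := (Fintype.orderIsoFinOfCardEq ι rfl).symm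
  have hlt {i j : ι} (hij : i < j) : ((e i : ℕ) : ℝ) + 1 ≤ (e j : ℕ) := by
    exact_mod_cast e.strictMono hij
  have hle {i j : ι} (hij : i ≤ j) : ((e i : ℕ) : ℝ) ≤ (e j : ℕ) := by
    exact_mod_cast e.monotone hij
  refine ⟨fun i => 1 - 2 * (e i : ℕ), fun i => -2 * (e i : ℕ), fun ε hε => ⟨?_, ?_⟩⟩
  · intro i j hij
    simp only [Pi.add_apply, Pi.smul_apply, smul_eq_mul]
    nlinarith [h.le_of_le hij, hle hij]
  · intro i j hij
    simp only [Pi.add_apply, Pi.smul_apply, smul_eq_mul]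
    nlinarith [h.le_of_lt hij, hlt hij]

lemma exists_add_vecMulVec_eq_conj [Fintype ι] (h : Interlaces α β) :
    ∃ v, ∃ P ∈ orthogonalGroup ι ℝ,
      diagonal β + vecMulVec v v = Pᵀ * diagonal α * P := by
  obtain ⟨s, t, hst⟩ := h.exists_strictlyInterlaces_perturbation
  let p (ε : ℝ) := (diagonal (α + ε • s), diagonal (β + ε • t))
  have hp : Continuous p := by fun_prop
  have hp0 : p 0 = (diagonal α, diagonal β) := by simp [p]
  have hlim : Filter.Tendsto p (nhdsWithin 0 (Set.Ioi 0)) (nhds (diagonal α, diagonal β)) :=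
    hp0 ▸ hp.continuousWithinAt
  refine isClosed_setOf_exists_add_vecMulVec_eq_conj.mem_of_tendsto hlim ?_
  filter_upwards [self_mem_nhdsWithin] with ε hε
  exact (hst ε hε).exists_add_vecMulVec_eq_conj

end Interlaces

end Interlacing

section SingularValues

lemma diagonal_add_vecMulVec_single_mul_transpose {ι R : Type*} [Fintype ι] [DecidableEq ι]
    [CommRing R] {c : ι → R} {l : ι} (hc : c l = 0) (v : ι → R) :
    (diagonal c + vecMulVec v (Pi.single l 1)) * (diagonal c + vecMulVec v (Pi.single l 1))ᵀ =
      diagonal (fun i => c i ^ 2) + vecMulVec v v := by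
  have hcl : diagonal c *ᵥ Pi.single l 1 = 0 := by
    rw [diagonal_mulVec_single, hc, zero_mul, Pi.single_zero]
  rw [transpose_add, diagonal_transpose, transpose_vecMulVec, add_mul, mul_add, mul_add,
    vecMulVec_mul_vecMulVec, mul_vecMulVec, hcl, vecMulVec_mul, ← mulVec_transpose,
    diagonal_transpose, hcl]
  simp [diagonal_mul_diagonal, sq]

lemma diagonal_add_vecMulVec_neg_single_mul_reflection {ι R : Type*} [Fintype ι] [DecidableEq ι]
    [CommRing R] {c : ι → R} {l : ι} (hc : c l = 0) (v : ι → R) :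
    (diagonal c + vecMulVec (-v) (Pi.single l 1)) * diagonal (Function.update 1 l (-1)) =
      diagonal c + vecMulVec v (Pi.single l 1) := by
  ext i j
  rw [mul_diagonal]
  rcases eq_or_ne j l with rfl | hj
  · rcases eq_or_ne i j with rfl | hij <;> simp [vecMulVec_apply, *]
  · simp [vecMulVec_apply, hj]

variable {ι : Type*} [Fintype ι] [LinearOrder ι] {a c : ι → ℝ} {l : ι}

lemma Interlaces.exists_orthogonal_mul_mul_transpose_eq_diagonal
    (h : Interlaces (fun i => a i ^ 2) (fun i => c i ^ 2)) (hc : c l = 0) :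
    ∃ v, ∃ P ∈ orthogonalGroup ι ℝ, ∃ Q ∈ orthogonalGroup ι ℝ,
      P * (diagonal c + vecMulVec v (Pi.single l 1)) * Qᵀ = diagonal a := by
  obtain ⟨v, P, hP, hPv⟩ := h.exists_add_vecMulVec_eq_conj
  have hgram : (diagonal c + vecMulVec v (Pi.single l 1)) *
      (diagonal c + vecMulVec v (Pi.single l 1))ᴴ = (Pᵀ * diagonal a) * (Pᵀ * diagonal a)ᴴ := by
    calc _ = diagonal (fun i => c i ^ 2) + vecMulVec v v := by
          rw [conjTranspose_eq_transpose_of_trivial,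
            diagonal_add_vecMulVec_single_mul_transpose hc]
      _ = Pᵀ * (diagonal a * diagonal a) * P := by
          rw [hPv, diagonal_mul_diagonal]
          simp only [sq]
      _ = _ := by
          rw [conjTranspose_eq_transpose_of_trivial, transpose_mul, transpose_transpose,
            diagonal_transpose]
          simp only [Matrix.mul_assoc]
  obtain ⟨Q, hQ, hvQ⟩ := exists_mem_unitaryGroup_eq_mul_of_mul_conjTranspose_eq hgram
  refine ⟨v, P, hP, Q, hQ, ?_⟩
  calc _ = (P * Pᵀ) * diagonal a * (Q * Qᵀ) := by rw [hvQ]; simp only [Matrix.mul_assoc]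
    _ = diagonal a := by
        rw [(mem_orthogonalGroup_iff ι ℝ).1 hP, (mem_orthogonalGroup_iff ι ℝ).1 hQ,
          Matrix.one_mul, Matrix.mul_one]

lemma Interlaces.exists_orthogonal_det_mul_det_eq_one
    (h : Interlaces (fun i => a i ^ 2) (fun i => c i ^ 2)) (hc : c l = 0) :
    ∃ v, ∃ P ∈ orthogonalGroup ι ℝ, ∃ Q ∈ orthogonalGroup ι ℝ, P.det * Q.det = 1 ∧
      P * (diagonal c + vecMulVec v (Pi.single l 1)) * Qᵀ = diagonal a := by
  obtain ⟨v, P, hP, Q, hQ, hPQ⟩ := h.exists_orthogonal_mul_mul_transpose_eq_diagonal hc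
  have hdet : P.det * Q.det = 1 ∨ P.det * Q.det = -1 := by
    have hPQ := congrArg det ((mem_orthogonalGroup_iff ι ℝ).1 (mul_mem hP hQ))
    rwa [det_mul, det_transpose, det_one, mul_self_eq_one_iff, det_mul] at hPQ
  rcases hdet with hdet | hdet
  · exact ⟨v, P, hP, Q, hQ, hdet, hPQ⟩
  let S : Matrix ι ι ℝ := diagonal (Function.update 1 l (-1))
  have hS : S ∈ orthogonalGroup ι ℝ := by
    rw [mem_orthogonalGroup_iff, diagonal_transpose, diagonal_mul_diagonal, ← diagonal_one]
    congr 1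
    ext i
    rcases eq_or_ne i l with rfl | hi <;> simp [*]
  have hSdet : S.det = -1 := by simp [S, det_diagonal, Finset.prod_update_of_mem]
  refine ⟨-v, P, hP, Q * S, mul_mem hQ hS, ?_, ?_⟩
  · rw [det_mul, hSdet, mul_neg_one, mul_neg, hdet, neg_neg]
  · rw [transpose_mul, diagonal_transpose, ← Matrix.mul_assoc, Matrix.mul_assoc P,
      diagonal_add_vecMulVec_neg_single_mul_reflection hc, hPQ]

end SingularValues

section EvenOdd

/-- The splitting of `Fin (2 * k)` into its even elements (left summand) and its odd elements
(right summand), which exhibits the skew-symmetric matrices at hand as bipartite. -/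
def evenOddEquiv (k : ℕ) : Fin k ⊕ Fin k ≃ Fin (2 * k) where
  toFun := Sum.elim (fun i => ⟨2 * i, by omega⟩) (fun i => ⟨2 * i + 1, by omega⟩)
  invFun i := if i.val % 2 = 0 then .inl ⟨i / 2, by omega⟩ else .inr ⟨i / 2, by omega⟩
  left_inv := by
    have hdiv (i : ℕ) : (2 * i + 1) / 2 = i := by omega
    rintro (i | i) <;> simp [Nat.add_mod, hdiv]
  right_inv i := by
    by_cases h : i.val % 2 = 0 <;> ext <;> simp [h] <;> omega

lemma diagL_submatrix_evenOddEquiv (k : ℕ) (a : Fin k → ℝ) :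
    (diagL (2 * k) k a).submatrix (evenOddEquiv k) (evenOddEquiv k) =
      fromBlocks 0 (-diagonal a) (diagonal a)ᵀ 0 := by
  have hdiv (i : ℕ) : (2 * i + 1) / 2 = i := by omega
  ext (i | i) (j | j) <;>
    simp [diagL, evenOddEquiv, diagonal_apply, hdiv, Fin.ext_iff, Nat.add_mod]

lemma Aeven_submatrix_evenOddEquiv {n : ℕ} (b : Fin n → ℝ) (v : Fin (n + 1) → ℝ) :
    (Aeven (n + 1) b fun i => if i.val % 2 = 0 then -v ⟨i / 2, by omega⟩ else 0).submatrix
        (evenOddEquiv (n + 1)) (evenOddEquiv (n + 1)) =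
      fromBlocks 0
        (-(diagonal (Fin.snoc b 0 : Fin (n + 1) → ℝ) + vecMulVec v (Pi.single (Fin.last n) 1)))
        (diagonal (Fin.snoc b 0 : Fin (n + 1) → ℝ) + vecMulVec v (Pi.single (Fin.last n) 1))ᵀ
        0 := by
  have heven (i : ℕ) : 2 * i < 2 * (n + 1) - 1 ↔ i ≤ n := by omega
  have hodd (i : ℕ) : 2 * i + 1 < 2 * (n + 1) - 1 ↔ i < n := by omega
  have hmk : (⟨n, n.lt_succ_self⟩ : Fin (n + 1)) = Fin.last n := rfl
  have hdiv (i : ℕ) : (2 * i + 1) / 2 = i := by omega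
  have hmod (i : ℕ) : (2 * i + 1) % 2 = 1 := by omega
  ext (i | i) (j | j)
  · simp [Aeven, diagL, evenOddEquiv, heven, Fin.is_le]
  · induction j using Fin.lastCases with
    | last =>
      rcases eq_or_ne i (Fin.last n) with rfl | hi
      · simp [Aeven, evenOddEquiv, vecMulVec_apply, heven, hodd, hmk]
      · simp [Aeven, evenOddEquiv, vecMulVec_apply, heven, hodd, hi, Fin.is_le]
    | cast j =>
      rcases eq_or_ne i j.castSucc with rfl | hi
      · simp [Aeven, diagL, evenOddEquiv, vecMulVec_apply, heven, hodd, hdiv, hmod, j.2.le]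
      · have hij : i.val ≠ j := Fin.val_ne_of_ne hi
        simp [Aeven, diagL, evenOddEquiv, vecMulVec_apply, heven, hodd, hdiv, hi, hij]
  · induction i using Fin.lastCases with
    | last =>
      rcases eq_or_ne j (Fin.last n) with rfl | hj
      · simp [Aeven, evenOddEquiv, vecMulVec_apply, heven, hodd, hmk]
      · simp [Aeven, evenOddEquiv, vecMulVec_apply, heven, hodd, Fin.is_le,
          diagonal_apply_ne' _ hj]
    | cast i =>
      rcases eq_or_ne j i.castSucc with rfl | hj
      · simp [Aeven, diagL, evenOddEquiv, vecMulVec_apply, heven, hodd, hdiv, hmod, i.2.le]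
      · have hij : i.val ≠ j := (Fin.val_ne_of_ne hj).symm
        simp [Aeven, diagL, evenOddEquiv, vecMulVec_apply, heven, hodd, hdiv, hij,
          diagonal_apply_ne' _ hj]
  · induction i using Fin.lastCases <;> induction j using Fin.lastCases <;>
      simp [Aeven, diagL, evenOddEquiv, hodd, hdiv, hmod]

lemma SOConj_of_submatrix_eq_fromBlocks {m : ℕ} {κ₁ κ₂ : Type*} [Fintype κ₁] [Fintype κ₂]
    [DecidableEq κ₁] [DecidableEq κ₂] (e : κ₁ ⊕ κ₂ ≃ Fin m)
    {X Y : Matrix (Fin m) (Fin m) ℝ} {M : Matrix κ₁ κ₂ ℝ}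
    {P : Matrix κ₁ κ₁ ℝ} {Q : Matrix κ₂ κ₂ ℝ}
    (hX : X.submatrix e e = fromBlocks 0 (-M) Mᵀ 0)
    (hY : Y.submatrix e e = fromBlocks 0 (-(P * M * Qᵀ)) (P * M * Qᵀ)ᵀ 0)
    (hP : P ∈ orthogonalGroup κ₁ ℝ) (hQ : Q ∈ orthogonalGroup κ₂ ℝ) (hPQ : P.det * Q.det = 1) :
    SOConj X Y := by
  let B := fromBlocks P 0 0 Q
  have hB : Bᵀ * B = 1 := by
    rw [fromBlocks_transpose, fromBlocks_multiply]
    simp [(mem_orthogonalGroup_iff' κ₁ ℝ).1 hP, (mem_orthogonalGroup_iff' κ₂ ℝ).1 hQ]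
  have hBXY : B * X.submatrix e e * Bᵀ = Y.submatrix e e := by
    rw [hX, hY, fromBlocks_transpose, fromBlocks_multiply, fromBlocks_multiply]
    simp [Matrix.mul_assoc]
  have hBe : (B.submatrix e.symm e.symm)ᵀ * B.submatrix e.symm e.symm = 1 := by
    rw [transpose_submatrix, submatrix_mul_equiv, hB, submatrix_one_equiv]
  refine ⟨B.submatrix e.symm e.symm, hBe, ?_, ?_⟩
  · rw [det_submatrix_equiv_self, det_fromBlocks_zero₂₁, hPQ]
  · have hXe : X = (X.submatrix e e).submatrix e.symm e.symm := by simp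
    rw [inv_eq_left_inv hBe, transpose_submatrix, hXe, submatrix_mul_equiv, submatrix_mul_equiv,
      hBXY, submatrix_submatrix, e.self_comp_symm, submatrix_id_id]

end EvenOdd

lemma interlaces_sq_snoc_zero {m : ℕ} {a : Fin (m + 2) → ℝ} {b : Fin (m + 1) → ℝ}
    (hba : ∀ i, b i ≤ a i.castSucc) (hab : ∀ i : Fin m, a i.succ.castSucc ≤ b i.castSucc)
    (hlast : |a (Fin.last (m + 1))| ≤ b (Fin.last m)) :
    Interlaces (fun i => a i ^ 2) (fun i => (Fin.snoc b 0 : Fin (m + 2) → ℝ) i ^ 2) := by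
  have hb : Antitone b := Fin.antitone_iff_succ_le.2 fun i => (hba _).trans (hab i)
  have hb0 (i : Fin (m + 1)) : 0 ≤ b i := (abs_nonneg _).trans (hlast.trans (hb (Fin.le_last i)))
  refine Interlaces.of_forall_succ (fun i => ?_) fun i => ?_
  · induction i using Fin.lastCases with
    | last => simpa only [Fin.snoc_last, zero_pow two_ne_zero] using sq_nonneg _
    | cast i => simpa only [Fin.snoc_castSucc] using pow_le_pow_left₀ (hb0 i) (hba i) 2
  · rw [Fin.snoc_castSucc]
    induction i using Fin.lastCases with
    | last => exact sq_le_sq.2 (hlast.trans (le_abs_self _))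
    | cast i => exact pow_le_pow_left₀ ((hb0 _).trans (hba i.succ)) (hab i) 2

theorem statement3_general {n : ℕ} (a : Fin (n + 1) → ℝ) (b : Fin n → ℝ)
    (h : Interlaces (fun i => a i ^ 2) (fun i => (Fin.snoc b 0 : Fin (n + 1) → ℝ) i ^ 2)) :
    ∃ Y : Fin (2 * (n + 1) - 1) → ℝ,
      SOConj (Aeven (n + 1) b Y) (diagL (2 * (n + 1)) (n + 1) a) := by
  obtain ⟨v, P, hP, Q, hQ, hPQ, ha⟩ :=
    h.exists_orthogonal_det_mul_det_eq_one (Fin.snoc_last (α := fun _ => ℝ) 0 b)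
  have hY := diagL_submatrix_evenOddEquiv (n + 1) a
  rw [← ha] at hY
  exact ⟨_, SOConj_of_submatrix_eq_fromBlocks (evenOddEquiv (n + 1))
    (Aeven_submatrix_evenOddEquiv b v) hY hP hQ hPQ⟩

/-- Lemma (openeven), existence part: under the interlacing chain
`a₁ ≥ b₁ ≥ a₂ ≥ b₂ ≥ … ≥ b_{k-1} ≥ |a_k|` there is `Y ∈ ℝ^{2k-1}` with
`A(b, Y)` SO(2k)-conjugate to `diag (L a₁, …, L a_k)`. -/
theorem statement3 (k : ℕ) (hk : 2 ≤ k) (a : Fin k → ℝ) (b : Fin (k-1) → ℝ)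
    (h1 : ∀ i : ℕ, ∀ h : i < k - 1, a ⟨i, by omega⟩ ≥ b ⟨i, h⟩)
    (h2 : ∀ i : ℕ, ∀ h : i + 1 < k - 1, b ⟨i, by omega⟩ ≥ a ⟨i + 1, by omega⟩)
    (h3 : b ⟨k - 2, by omega⟩ ≥ |a ⟨k - 1, by omega⟩|) :
    ∃ Y : Fin (2*k-1) → ℝ, SOConj (Aeven k b Y) (diagL (2*k) k a) := by
  obtain ⟨m, rfl⟩ : ∃ m, k = m + 2 := ⟨k - 2, by omega⟩
  exact statement3_general a b
    (interlaces_sq_snoc_zero (fun i => h1 i i.2) (fun i => h2 i (by omega)) h3)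
end

section
/- Let k ≥ 2 and let a_1,…,a_k and b_1,…,b_{k−1} be real numbers with a_1 ≥ a_2 ≥ … ≥ a_{k−1} ≥ |a_k| and b_1 ≥ b_2 ≥ … ≥ b_{k−1} ≥ 0. If there exists Y = (y_1,…,y_{2k−1}) ∈ ℝ^{2k−1} such that A(b,Y) is SO(2k)-conjugate to diag(L(a_1),…,L(a_k)), then the interlacing chain a_1 ≥ b_1 ≥ a_2 ≥ b_2 ≥ … ≥ b_{k−1} ≥ |a_k| holds. -/
open Matrix Polynomial

/-!
For `D = diag (L c₁, …, L cₙ)` one has `‖D w‖² = ∑ cᵢ² (w₂ᵢ₋₁² + w₂ᵢ²)`, so the squared singular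
values of `D` are the `cᵢ²`, each taken twice. Conjugation by an orthogonal `B` preserves norms, and
therefore on the hyperplane of vectors `u` with last coordinate zero
`‖diag (L a) B u‖² = ‖A(b, Y) u‖² = ‖diag (L b, 0) u‖² + ((A(b, Y) u)_last)²`.
The min-max principle applied to this hyperplane, where the last square is nonnegative, compares
singular values with an index shift of one; applied to the subspace of codimension two where the
last square vanishes, it gives the reverse comparison with a shift of two. Since every value is
doubled, these are `|aᵢ| ≥ |bᵢ|` and `|bᵢ| ≥ |aᵢ₊₁|`.
-/

section WeightedSums

variable {K : Type*} [CommRing K] [LinearOrder K] [IsStrictOrderedRing K]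

lemma sum_mul_sq_le_mul_sum_sq {ι : Type*} [Fintype ι] {f w : ι → K} {r : K}
    (h : ∀ l, w l ≠ 0 → f l ≤ r) : ∑ l, f l * w l ^ 2 ≤ r * ∑ l, w l ^ 2 := by
  rw [Finset.mul_sum]
  refine Finset.sum_le_sum fun l _ => ?_
  rcases eq_or_ne (w l) 0 with hw | hw
  · simp [hw]
  · exact mul_le_mul_of_nonneg_right (h l hw) (sq_nonneg _)

lemma mul_sum_sq_le_sum_mul_sq {ι : Type*} [Fintype ι] {f w : ι → K} {r : K}
    (h : ∀ l, w l ≠ 0 → r ≤ f l) : r * ∑ l, w l ^ 2 ≤ ∑ l, f l * w l ^ 2 := by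
  simpa using sum_mul_sq_le_mul_sum_sq (f := -f) (r := -r) fun l hl => neg_le_neg (h l hl)

lemma sum_sq_pos_of_ne_zero {ι : Type*} [Fintype ι] {w : ι → K} (hw : w ≠ 0) :
    0 < ∑ l, w l ^ 2 := by
  obtain ⟨l, hl⟩ := Function.ne_iff.mp hw
  exact Finset.sum_pos' (fun _ _ => sq_nonneg _) ⟨l, Finset.mem_univ l, sq_pos_of_ne_zero hl⟩

end WeightedSums

section MinMax

open Module

lemma finrank_le_finrank_ker_add {K V U : Type*} [DivisionRing K] [AddCommGroup V] [Module K V]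
    [AddCommGroup U] [Module K U] [FiniteDimensional K V] [FiniteDimensional K U]
    (L : V →ₗ[K] U) : finrank K V ≤ finrank K (LinearMap.ker L) + finrank K U := by
  have hrange := Submodule.finrank_le (LinearMap.range L)
  have hsum := L.finrank_range_add_finrank_ker
  omega

lemma exists_ne_zero_coord_eq_zero {K V : Type*} [DivisionRing K] [AddCommGroup V] [Module K V]
    {n : ℕ} (φ ψ : V →ₗ[K] Fin n → K) {i j : Fin n} (hij : i + n ≤ j + finrank K V) :
    ∃ v ≠ 0, (∀ l < i, φ v l = 0) ∧ ∀ l > j, ψ v l = 0 := by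
  have : FiniteDimensional K V := finite_of_finrank_pos (by omega)
  let L : V →ₗ[K] (Finset.Iio i → K) × (Finset.Ioi j → K) :=
    (LinearMap.pi fun l => LinearMap.proj l.1 ∘ₗ φ).prod
      (LinearMap.pi fun l => LinearMap.proj l.1 ∘ₗ ψ)
  have hL : LinearMap.ker L ≠ ⊥ := L.ker_ne_bot_of_finrank_lt <| by
    simp only [finrank_prod, finrank_fintype_fun_eq_card, Fintype.card_coe, Fin.card_Iio,
      Fin.card_Ioi]
    omega
  obtain ⟨v, hv, hv0⟩ := Submodule.exists_mem_ne_zero_of_ne_bot hL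
  obtain ⟨hφ, hψ⟩ := Prod.ext_iff.mp (LinearMap.mem_ker.mp hv)
  exact ⟨v, hv0, fun l hl => congrFun hφ ⟨l, Finset.mem_Iio.mpr hl⟩,
    fun l hl => congrFun hψ ⟨l, Finset.mem_Ioi.mpr hl⟩⟩

/- This is the Courant–Fischer comparison: when `V` is a subspace of codimension `c` in `Kⁿ`, and
`φ`, `ψ` are coordinates with respect to two orthonormal bases, the index condition reads
`i + c ≤ j`. -/
lemma le_of_sum_mul_sq_le_sum_mul_sq {K V : Type*} [Field K] [LinearOrder K]
    [IsStrictOrderedRing K] [AddCommGroup V] [Module K V] {n : ℕ} {f g : Fin n → K}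
    (hf : Antitone f) (hg : Antitone g) {φ ψ : V →ₗ[K] Fin n → K}
    (hψ : Function.Injective ψ) (hnorm : ∀ v, ∑ l, φ v l ^ 2 = ∑ l, ψ v l ^ 2)
    (hle : ∀ v, ∑ l, g l * ψ v l ^ 2 ≤ ∑ l, f l * φ v l ^ 2) {i j : Fin n}
    (hij : i + n ≤ j + finrank K V) : g j ≤ f i := by
  obtain ⟨v, hv, hφv, hψv⟩ := exists_ne_zero_coord_eq_zero φ ψ hij
  have hpos : 0 < ∑ l, ψ v l ^ 2 := sum_sq_pos_of_ne_zero ((map_ne_zero_iff ψ hψ).mpr hv)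
  refine le_of_mul_le_mul_right ?_ hpos
  calc g j * ∑ l, ψ v l ^ 2
      ≤ ∑ l, g l * ψ v l ^ 2 :=
        mul_sum_sq_le_sum_mul_sq fun l hl => hg (not_lt.mp fun h => hl (hψv l h))
    _ ≤ ∑ l, f l * φ v l ^ 2 := hle v
    _ ≤ f i * ∑ l, φ v l ^ 2 :=
        sum_mul_sq_le_mul_sum_sq fun l hl => hf (not_lt.mp fun h => hl (hφv l h))
    _ = f i * ∑ l, ψ v l ^ 2 := by rw [hnorm]

end MinMax

lemma sum_sq_mulVec_of_transpose_mul_self {R m n : Type*} [CommSemiring R] [Fintype m] [Fintype n]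
    [DecidableEq n] {B : Matrix m n R} (hB : Bᵀ * B = 1) (u : n → R) :
    ∑ j, (B *ᵥ u) j ^ 2 = ∑ j, u j ^ 2 := by
  have h : (B *ᵥ u) ⬝ᵥ (B *ᵥ u) = u ⬝ᵥ u := by
    rw [dotProduct_mulVec, ← mulVec_transpose, mulVec_mulVec, hB, one_mulVec]
  simpa only [dotProduct, ← sq] using h

/-- The squared singular values of `diagL m n c` for `2 * n ≤ m`, listed along the diagonal: each
`c i ^ 2` occurs twice, followed by zeros. -/
def diagLSq (m : ℕ) {n : ℕ} (c : Fin n → ℝ) (j : Fin m) : ℝ :=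
  if h : j.val / 2 < n then c ⟨j.val / 2, h⟩ ^ 2 else 0

lemma diagLSq_of_div_two_eq {m n : ℕ} (c : Fin n → ℝ) {j : Fin m} {i : Fin n}
    (h : j.val / 2 = i) : diagLSq m c j = c i ^ 2 := by
  simp [diagLSq, h]

lemma antitone_diagLSq {m n : ℕ} {c : Fin n → ℝ} (hc : Antitone fun i => |c i|) :
    Antitone (diagLSq m c) := by
  intro j l hjl
  have hdiv : j.val / 2 ≤ l.val / 2 := Nat.div_le_div_right hjl
  by_cases hl : l.val / 2 < n
  · rw [diagLSq, diagLSq, dif_pos hl, dif_pos (hdiv.trans_lt hl), sq_le_sq]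
    exact hc hdiv
  · rw [diagLSq, diagLSq, dif_neg hl]
    split_ifs <;> positivity

/-- The index sharing a `2 × 2` diagonal block with `j`. -/
def blockPartner {k : ℕ} (j : Fin (2 * k)) : Fin (2 * k) :=
  ⟨if j.val % 2 = 0 then j.val + 1 else j.val - 1, by split_ifs <;> omega⟩

lemma blockPartner_involutive {k : ℕ} :
    Function.Involutive (blockPartner : Fin (2 * k) → Fin (2 * k)) := by
  intro j
  apply Fin.ext
  simp only [blockPartner]
  split_ifs <;> omega

lemma eq_blockPartner_iff {k : ℕ} {j l : Fin (2 * k)} :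
    l = blockPartner j ↔ j.val / 2 = l.val / 2 ∧ j.val % 2 ≠ l.val % 2 := by
  simp only [Fin.ext_iff, blockPartner]
  split_ifs <;> omega

section diagL

variable {k n : ℕ} (c : Fin n → ℝ)

lemma diagL_apply_of_ne_blockPartner {j l : Fin (2 * k)} (hl : l ≠ blockPartner j) :
    diagL (2 * k) n c j l = 0 := by
  rw [Ne, eq_blockPartner_iff] at hl
  simp only [diagL, of_apply]
  split_ifs <;> first | rfl | omega

lemma diagL_apply_blockPartner_sq (j : Fin (2 * k)) :
    diagL (2 * k) n c j (blockPartner j) ^ 2 = diagLSq (2 * k) c (blockPartner j) := by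
  obtain ⟨hdiv, hmod⟩ := eq_blockPartner_iff.mp (Eq.refl (blockPartner j))
  simp only [diagL, of_apply, diagLSq, ← hdiv, true_and]
  split_ifs <;> first | omega | ring

lemma sum_sq_diagL_mulVec (w : Fin (2 * k) → ℝ) :
    ∑ j, (diagL (2 * k) n c *ᵥ w) j ^ 2 = ∑ j, diagLSq (2 * k) c j * w j ^ 2 := by
  have hentry (j : Fin (2 * k)) : (diagL (2 * k) n c *ᵥ w) j ^ 2 =
      diagLSq (2 * k) c (blockPartner j) * w (blockPartner j) ^ 2 := by
    rw [mulVec, dotProduct, Fintype.sum_eq_single (blockPartner j) fun l hl => by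
      rw [diagL_apply_of_ne_blockPartner c hl, zero_mul], mul_pow, diagL_apply_blockPartner_sq]
  simp only [hentry]
  exact Equiv.sum_comp blockPartner_involutive.toPerm fun j => diagLSq (2 * k) c j * w j ^ 2

end diagL

section Aeven

variable {k : ℕ} (b : Fin (k - 1) → ℝ) (Y : Fin (2 * k - 1) → ℝ) {u : Fin (2 * k) → ℝ}
  {t : Fin (2 * k)}

lemma Aeven_mulVec_apply_of_ne_last (ht : t.val + 1 = 2 * k) (hu : u t = 0) {j : Fin (2 * k)}
    (hj : j ≠ t) : (Aeven k b Y *ᵥ u) j = (diagL (2 * k) (k - 1) b *ᵥ u) j := by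
  have lt_of_ne_last {l : Fin (2 * k)} (hl : l ≠ t) : l.val < 2 * k - 1 := by
    have := Fin.val_ne_of_ne hl
    omega
  simp only [mulVec, dotProduct]
  refine Finset.sum_congr rfl fun l _ => ?_
  rcases eq_or_ne l t with rfl | hl
  · simp only [hu, mul_zero]
  · simp [Aeven, diagL, lt_of_ne_last hj, lt_of_ne_last hl]

lemma diagL_mulVec_last (ht : t.val + 1 = 2 * k) :
    (diagL (2 * k) (k - 1) b *ᵥ u) t = 0 := by
  rw [mulVec, dotProduct]
  refine Finset.sum_eq_zero fun l _ => ?_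
  have : ¬ t.val / 2 < k - 1 := by omega
  simp [diagL, this]

lemma sum_sq_Aeven_mulVec (ht : t.val + 1 = 2 * k) (hu : u t = 0) :
    ∑ j, (Aeven k b Y *ᵥ u) j ^ 2 =
      (Aeven k b Y *ᵥ u) t ^ 2 + ∑ j, diagLSq (2 * k) b j * u j ^ 2 := by
  rw [← sum_sq_diagL_mulVec, Fintype.sum_eq_add_sum_subtype_ne _ t,
    Fintype.sum_eq_add_sum_subtype_ne (fun j => (diagL (2 * k) (k - 1) b *ᵥ u) j ^ 2) t,
    diagL_mulVec_last b ht, zero_pow two_ne_zero, zero_add]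
  exact congrArg _ (Fintype.sum_congr _ _ fun j =>
    congrArg (· ^ 2) (Aeven_mulVec_apply_of_ne_last b Y ht hu j.2))

end Aeven

section Interlacing

variable {k : ℕ} {a : Fin k → ℝ} {b : Fin (k - 1) → ℝ} {Y : Fin (2 * k - 1) → ℝ}
  {B : Matrix (Fin (2 * k)) (Fin (2 * k)) ℝ}

lemma sum_diagLSq_mul_sq_mulVec (hB : Bᵀ * B = 1)
    (hconj : B * Aeven k b Y * B⁻¹ = diagL (2 * k) k a) {t : Fin (2 * k)}
    (ht : t.val + 1 = 2 * k) {u : Fin (2 * k) → ℝ} (hu : u t = 0) :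
    ∑ j, diagLSq (2 * k) a j * (B *ᵥ u) j ^ 2 =
      (Aeven k b Y *ᵥ u) t ^ 2 + ∑ j, diagLSq (2 * k) b j * u j ^ 2 := by
  have hintertwine : diagL (2 * k) k a * B = B * Aeven k b Y := by
    rw [← hconj, Matrix.mul_assoc, inv_eq_left_inv hB, hB, Matrix.mul_one]
  rw [← sum_sq_diagL_mulVec, mulVec_mulVec, hintertwine, ← mulVec_mulVec,
    sum_sq_mulVec_of_transpose_mul_self hB, sum_sq_Aeven_mulVec b Y ht hu]

lemma diagLSq_le_of_add_one_le (ha : Antitone fun i => |a i|) (hb : Antitone fun i => |b i|)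
    (hB : Bᵀ * B = 1) (hconj : B * Aeven k b Y * B⁻¹ = diagL (2 * k) k a) {i j : Fin (2 * k)}
    (hij : i.val + 1 ≤ j) : diagLSq (2 * k) b j ≤ diagLSq (2 * k) a i := by
  let t : Fin (2 * k) := ⟨2 * k - 1, by omega⟩
  have ht : t.val + 1 = 2 * k := by simp only [t]; omega
  let L : (Fin (2 * k) → ℝ) →ₗ[ℝ] ℝ := LinearMap.proj t
  let W := LinearMap.ker L
  have hW : _ ≤ Module.finrank ℝ W + _ := finrank_le_finrank_ker_add L
  rw [Module.finrank_fin_fun, Module.finrank_self] at hW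
  refine le_of_sum_mul_sq_le_sum_mul_sq (antitone_diagLSq ha) (antitone_diagLSq hb)
    (φ := B.mulVecLin ∘ₗ W.subtype) (ψ := W.subtype) W.injective_subtype
    (fun u => sum_sq_mulVec_of_transpose_mul_self hB u.1) (fun u => ?_) (by omega)
  exact (le_add_of_nonneg_left (sq_nonneg _)).trans_eq
    (sum_diagLSq_mul_sq_mulVec hB hconj ht u.2).symm

lemma diagLSq_le_of_add_two_le (ha : Antitone fun i => |a i|) (hb : Antitone fun i => |b i|)
    (hB : Bᵀ * B = 1) (hconj : B * Aeven k b Y * B⁻¹ = diagL (2 * k) k a) {i j : Fin (2 * k)}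
    (hij : i.val + 2 ≤ j) : diagLSq (2 * k) a j ≤ diagLSq (2 * k) b i := by
  let t : Fin (2 * k) := ⟨2 * k - 1, by omega⟩
  have ht : t.val + 1 = 2 * k := by simp only [t]; omega
  let L : (Fin (2 * k) → ℝ) →ₗ[ℝ] ℝ × ℝ :=
    (LinearMap.proj t).prod (LinearMap.proj t ∘ₗ (Aeven k b Y).mulVecLin)
  let W := LinearMap.ker L
  have hW : _ ≤ Module.finrank ℝ W + _ := finrank_le_finrank_ker_add L
  rw [Module.finrank_fin_fun, Module.finrank_prod, Module.finrank_self] at hW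
  refine le_of_sum_mul_sq_le_sum_mul_sq (antitone_diagLSq hb) (antitone_diagLSq ha)
    (φ := W.subtype) (ψ := B.mulVecLin ∘ₗ W.subtype) ?_
    (fun u => (sum_sq_mulVec_of_transpose_mul_self hB u.1).symm) (fun u => ?_) (by omega)
  · exact (mulVec_injective_of_isUnit (IsUnit.of_mul_eq_one_right _ hB)).comp W.injective_subtype
  · obtain ⟨hu, hAu⟩ := Prod.ext_iff.mp (LinearMap.mem_ker.mp u.2)
    have hAu : (Aeven k b Y *ᵥ u.1) t = 0 := hAu
    refine (sum_diagLSq_mul_sq_mulVec hB hconj ht hu).trans_le ?_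
    rw [hAu, zero_pow two_ne_zero, zero_add]
    rfl

theorem statement4_general (ha : Antitone fun i => |a i|) (hb : Antitone fun i => |b i|)
    (hB : Bᵀ * B = 1) (hconj : B * Aeven k b Y * B⁻¹ = diagL (2 * k) k a) {i : ℕ}
    (hi : i < k - 1) :
    |b ⟨i, hi⟩| ≤ |a ⟨i, by omega⟩| ∧ |a ⟨i + 1, by omega⟩| ≤ |b ⟨i, hi⟩| := by
  have hba := diagLSq_le_of_add_one_le ha hb hB hconj (i := ⟨2 * i, by omega⟩)
    (j := ⟨2 * i + 1, by omega⟩) le_rfl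
  have hab := diagLSq_le_of_add_two_le ha hb hB hconj (i := ⟨2 * i, by omega⟩)
    (j := ⟨2 * i + 2, by omega⟩) le_rfl
  rw [diagLSq_of_div_two_eq a (i := ⟨i, by omega⟩) (by simp),
    diagLSq_of_div_two_eq b (i := ⟨i, hi⟩) (by simp only; omega), sq_le_sq] at hba
  rw [diagLSq_of_div_two_eq a (i := ⟨i + 1, by omega⟩) (by simp only; omega),
    diagLSq_of_div_two_eq b (i := ⟨i, hi⟩) (by simp), sq_le_sq] at hab
  exact ⟨hba, hab⟩

end Interlacing

lemma antitone_abs_of_antitone_init {R : Type*} [AddCommGroup R] [LinearOrder R]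
    [IsOrderedAddMonoid R] {m : ℕ} {a : Fin (m + 2) → R} (ha : Antitone (Fin.init a))
    (hlast : |a (Fin.last (m + 1))| ≤ Fin.init a (Fin.last m)) : Antitone fun i => |a i| := by
  refine Fin.antitone_iff_succ_le.mpr fun i => ?_
  induction i using Fin.lastCases with
  | last => exact hlast.trans (le_abs_self _)
  | cast i =>
    have hnonneg : 0 ≤ Fin.init a i.succ :=
      ((abs_nonneg _).trans hlast).trans (ha (Fin.le_last _))
    exact abs_le_abs_of_nonneg hnonneg (ha i.castSucc_lt_succ.le)

/-- Lemma (openeven), necessity part: if `a₁ ≥ … ≥ a_{k-1} ≥ |a_k|`,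
`b₁ ≥ … ≥ b_{k-1} ≥ 0`, and some `Y` makes `A(b, Y)` SO(2k)-conjugate to
`diag (L a₁, …, L a_k)`, then the interlacing chain
`a₁ ≥ b₁ ≥ a₂ ≥ b₂ ≥ … ≥ b_{k-1} ≥ |a_k|` holds. -/
theorem statement4 (k : ℕ) (hk : 2 ≤ k) (a : Fin k → ℝ) (b : Fin (k-1) → ℝ)
    (ha1 : ∀ i : ℕ, ∀ h : i + 2 < k, a ⟨i, by omega⟩ ≥ a ⟨i + 1, by omega⟩)
    (ha2 : a ⟨k - 2, by omega⟩ ≥ |a ⟨k - 1, by omega⟩|)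
    (hb1 : ∀ i : ℕ, ∀ h : i + 1 < k - 1, b ⟨i, by omega⟩ ≥ b ⟨i + 1, h⟩)
    (hb2 : b ⟨k - 2, by omega⟩ ≥ 0)
    (hY : ∃ Y : Fin (2*k-1) → ℝ, SOConj (Aeven k b Y) (diagL (2*k) k a)) :
    (∀ i : ℕ, ∀ h : i < k - 1, a ⟨i, by omega⟩ ≥ b ⟨i, h⟩) ∧
    (∀ i : ℕ, ∀ h : i + 1 < k - 1, b ⟨i, by omega⟩ ≥ a ⟨i + 1, by omega⟩) ∧
    b ⟨k - 2, by omega⟩ ≥ |a ⟨k - 1, by omega⟩| := by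
  obtain ⟨Y, B, hB, -, hconj⟩ := hY
  obtain ⟨m, rfl⟩ := Nat.exists_eq_add_of_le' hk
  have ha : Antitone (Fin.init a) := Fin.antitone_iff_succ_le.mpr fun i => ha1 i (by omega)
  have hb : Antitone b := Fin.antitone_iff_succ_le.mpr fun i => hb1 i (Nat.succ_lt_succ i.2)
  have ha_nonneg (i : Fin (m + 1)) : 0 ≤ a i.castSucc :=
    ((abs_nonneg _).trans ha2).trans (ha (Fin.le_last i))
  have hb_nonneg (i : Fin (m + 1)) : 0 ≤ b i := hb2.trans (hb (Fin.le_last i))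
  have hinterlace {i : ℕ} (hi : i < m + 1) := statement4_general
    (antitone_abs_of_antitone_init ha ha2)
    (fun i j hij => abs_le_abs_of_nonneg (hb_nonneg j) (hb hij)) hB hconj hi
  refine ⟨fun i h => ?_, fun i h => ?_, ?_⟩
  · exact (le_abs_self _).trans
      ((hinterlace h).1.trans_eq (abs_of_nonneg (ha_nonneg ⟨i, h⟩)))
  · exact (le_abs_self _).trans
      ((hinterlace (by omega)).2.trans_eq (abs_of_nonneg (hb_nonneg ⟨i, by omega⟩)))
  · exact (hinterlace m.lt_succ_self).2.trans_eq (abs_of_nonneg (hb_nonneg (Fin.last m)))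
end
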